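/- (Best low-rank approximation via SVD, Frobenius norm.) Let U be a real m×n matrix with singular value decomposition U = Σ_{i=1}^{n} d_i û_i w̃_iᵀ, where d₁ ≥ … ≥ d_n ≥ 0. Then for every r ≤ n, the truncated matrix U_r = Σ_{i=1}^{r} d_i û_i w̃_iᵀ has rank at most r, satisfies ‖U − U_r‖_F² = Σ_{i=r+1}^{n} d_i², and for every real m×n matrix B of rank at most r, ‖U − B‖_F² ≥ Σ_{i=r+1}^{n} d_i². Hence U_r is a best rank-r approximation of U in the Frobenius norm. -/

import Mathlib

open Finset

/-!
Write `P` for the orthogonal projection onto the column space of `B`. By Bessel's inequality along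
the right singular vectors,
`‖U - B‖_F² ≥ ∑ i, ‖(U - B) wᵢ‖² = ∑ i, ‖dᵢ uᵢ - B wᵢ‖² ≥ ∑ i, dᵢ² (1 - ‖P uᵢ‖²)`.
The weights `‖P uᵢ‖²` lie in `[0, 1]` and, by Bessel's inequality along an orthonormal basis of the
column space, sum to at most `rank B`; so `∑ i, dᵢ² ‖P uᵢ‖²` is at most the sum of the `rank B`
largest `dᵢ²`.
-/

lemma sum_mul_le_sum_of_sum_le_card {ι R : Type*} [Fintype ι] [CommRing R]
    [LinearOrder R] [IsStrictOrderedRing R] {a p : ι → R} {s : Finset ι} (ha : ∀ i, 0 ≤ a i)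
    (ha_le : ∀ i ∈ s, ∀ j ∉ s, a j ≤ a i) (hp₀ : ∀ i, 0 ≤ p i) (hp₁ : ∀ i, p i ≤ 1)
    (hp : ∑ i, p i ≤ #s) : ∑ i, p i * a i ≤ ∑ i ∈ s, a i := by
  classical
  obtain ⟨c, hc, hcs, hcsc⟩ : ∃ c, 0 ≤ c ∧ (∀ i ∈ s, c ≤ a i) ∧ ∀ j ∈ sᶜ, a j ≤ c := by
    obtain hs | hs := sᶜ.eq_empty_or_nonempty
    · exact ⟨0, le_rfl, fun i _ ↦ ha i, by simp [hs]⟩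
    · obtain ⟨j, hj, hmax⟩ := exists_max_image sᶜ a hs
      exact ⟨a j, ha j, fun i hi ↦ ha_le i hi j (mem_compl.1 hj), hmax⟩
  have h_in : ∑ i ∈ s, p i * (a i - c) ≤ ∑ i ∈ s, (a i - c) :=
    sum_le_sum fun i hi ↦ mul_le_of_le_one_left (sub_nonneg.2 (hcs i hi)) (hp₁ i)
  have h_out : ∑ i ∈ sᶜ, p i * (a i - c) ≤ 0 :=
    sum_nonpos fun i hi ↦ mul_nonpos_of_nonneg_of_nonpos (hp₀ i) (sub_nonpos.2 (hcsc i hi))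
  calc ∑ i, p i * a i
      = ∑ i ∈ s, p i * (a i - c) + ∑ i ∈ sᶜ, p i * (a i - c) + (∑ i, p i) * c := by
        rw [sum_add_sum_compl, sum_mul, ← sum_add_distrib]
        exact sum_congr rfl fun i _ ↦ by ring
    _ ≤ ∑ i ∈ s, (a i - c) + 0 + #s * c := by gcongr
    _ = ∑ i ∈ s, a i := by simp [sum_sub_distrib]

section InnerProductSpace

variable {𝕜 E ι : Type*} [RCLike 𝕜] [NormedAddCommGroup E] [InnerProductSpace 𝕜 E] {u : ι → E}

lemma sum_norm_sq_starProjection_le_finrank (hu : Orthonormal 𝕜 u) (V : Submodule 𝕜 E)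
    [FiniteDimensional 𝕜 V] (s : Finset ι) :
    ∑ i ∈ s, ‖V.starProjection (u i)‖ ^ 2 ≤ Module.finrank 𝕜 V := by
  let e := stdOrthonormalBasis 𝕜 V
  have h_coord (x : E) : ‖V.starProjection x‖ ^ 2 = ∑ j, ‖inner 𝕜 x (e j : E)‖ ^ 2 := by
    rw [V.starProjection_apply, ← Submodule.coe_norm, ← e.sum_sq_norm_inner_left]
    simp only [Submodule.inner_orthogonalProjectionOnto_eq_of_mem_right]
  calc ∑ i ∈ s, ‖V.starProjection (u i)‖ ^ 2
      = ∑ j, ∑ i ∈ s, ‖inner 𝕜 (u i) (e j : E)‖ ^ 2 := by simp only [h_coord, sum_comm (s := s)]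
    _ ≤ ∑ j, ‖(e j : E)‖ ^ 2 := sum_le_sum fun j _ ↦ hu.sum_inner_products_le _
    _ = Module.finrank 𝕜 V := by simp only [Submodule.norm_coe, e.norm_eq_one, one_pow, sum_const,
        card_univ, Fintype.card_fin, nsmul_one]

lemma norm_sq_sub_norm_sq_starProjection_le (V : Submodule 𝕜 E) [V.HasOrthogonalProjection]
    (x : E) {y : E} (hy : y ∈ V) :
    ‖x‖ ^ 2 - ‖V.starProjection x‖ ^ 2 ≤ ‖x - y‖ ^ 2 := by
  have h_proj : Vᗮ.starProjection (x - y) = Vᗮ.starProjection x := by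
    rw [map_sub, Submodule.starProjection_orthogonal_apply_eq_zero hy, sub_zero]
  calc ‖x‖ ^ 2 - ‖V.starProjection x‖ ^ 2
      = ‖Vᗮ.starProjection (x - y)‖ ^ 2 := by
        rw [h_proj, Submodule.norm_sq_eq_add_norm_sq_starProjection x V, add_sub_cancel_left]
    _ ≤ ‖x - y‖ ^ 2 := by gcongr; exact Vᗮ.norm_starProjection_apply_le _

lemma sum_compl_norm_sq_le_sum_norm_sq_smul_sub [Fintype ι] [DecidableEq ι]
    (hu : Orthonormal 𝕜 u) {d : ι → 𝕜} {s : Finset ι} (hd : ∀ i ∈ s, ∀ j ∉ s, ‖d j‖ ≤ ‖d i‖)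
    {V : Submodule 𝕜 E} [FiniteDimensional 𝕜 V] (hV : Module.finrank 𝕜 V ≤ #s)
    {y : ι → E} (hy : ∀ i, y i ∈ V) :
    ∑ i ∈ sᶜ, ‖d i‖ ^ 2 ≤ ∑ i, ‖d i • u i - y i‖ ^ 2 := by
  have h_captured : ∑ i, ‖V.starProjection (u i)‖ ^ 2 * ‖d i‖ ^ 2 ≤ ∑ i ∈ s, ‖d i‖ ^ 2 := by
    refine sum_mul_le_sum_of_sum_le_card (fun _ ↦ by positivity)
      (fun i hi j hj ↦ by gcongr; exact hd i hi j hj) (fun _ ↦ by positivity) (fun i ↦ ?_) ?_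
    · exact pow_le_one₀ (norm_nonneg _) ((V.norm_starProjection_apply_le _).trans_eq (hu.1 i))
    · exact (sum_norm_sq_starProjection_le_finrank hu V univ).trans (mod_cast hV)
  calc ∑ i ∈ sᶜ, ‖d i‖ ^ 2
      = ∑ i, ‖d i‖ ^ 2 - ∑ i ∈ s, ‖d i‖ ^ 2 := by rw [← sum_compl_add_sum s, add_sub_cancel_right]
    _ ≤ ∑ i, ‖d i‖ ^ 2 - ∑ i, ‖V.starProjection (u i)‖ ^ 2 * ‖d i‖ ^ 2 := by gcongr
    _ = ∑ i, (‖d i • u i‖ ^ 2 - ‖V.starProjection (d i • u i)‖ ^ 2) := by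
        simp only [← sum_sub_distrib, map_smul, norm_smul, mul_pow, hu.1, mul_one, mul_comm]
    _ ≤ ∑ i, ‖d i • u i - y i‖ ^ 2 :=
        sum_le_sum fun i _ ↦ norm_sq_sub_norm_sq_starProjection_le V _ (hy i)

lemma norm_sq_sum_smul_of_orthonormal (hu : Orthonormal 𝕜 u) (c : ι → 𝕜) (s : Finset ι) :
    ‖∑ i ∈ s, c i • u i‖ ^ 2 = ∑ i ∈ s, ‖c i‖ ^ 2 := by
  simpa using hu.orthogonalFamily.norm_sum c s

end InnerProductSpace

section Matrix

open Matrix WithLp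
open scoped Matrix.Norms.Frobenius

variable {𝕜 m n ι : Type*}

lemma rank_sum_vecMulVec_le {R : Type*} [Fintype n] [CommRing R] [StrongRankCondition R]
    (x : ι → m → R) (y : ι → n → R) (s : Finset ι) :
    (∑ i ∈ s, vecMulVec (x i) (y i)).rank ≤ #s := by
  have h_mul : ∑ i ∈ s, vecMulVec (x i) (y i) =
      (of fun a (i : s) ↦ x i a) * of fun (i : s) b ↦ y i b := by
    ext a b
    simp only [Matrix.sum_apply, vecMulVec_apply, mul_apply, of_apply]
    exact (sum_coe_sort s fun i ↦ x i a * y i b).symm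
  calc (∑ i ∈ s, vecMulVec (x i) (y i)).rank
      ≤ (of fun a (i : s) ↦ x i a).rank := h_mul ▸ rank_mul_le_left _ _
    _ ≤ #s := (rank_le_card_width _).trans_eq (Fintype.card_coe s)

lemma frobenius_norm_sq_eq_sum {α : Type*} [Fintype m] [Fintype n] [SeminormedAddCommGroup α]
    (A : Matrix m n α) : ‖A‖ ^ 2 = ∑ a, ∑ b, ‖A a b‖ ^ 2 := by
  rw [frobenius_norm_def, ← Real.sqrt_eq_rpow, Real.sq_sqrt (by positivity)]
  simp only [Real.rpow_two]

variable [RCLike 𝕜]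

lemma finrank_range_toEuclideanLin [Finite m] [Fintype n] [DecidableEq n] (A : Matrix m n 𝕜) :
    Module.finrank 𝕜 (LinearMap.range (toEuclideanLin A)) = A.rank := by
  rw [toEuclideanLin, toLpLin_eq_toLin, ← rank_eq_finrank_range_toLin]

lemma sum_norm_sq_toEuclideanLin_le_frobenius_norm_sq [Fintype m] [Fintype n] [DecidableEq n]
    {w : ι → EuclideanSpace 𝕜 n} (hw : Orthonormal 𝕜 w) (A : Matrix m n 𝕜) (s : Finset ι) :
    ∑ i ∈ s, ‖toEuclideanLin A (w i)‖ ^ 2 ≤ ‖A‖ ^ 2 := by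
  have h_row (i : ι) (a : m) :
      ‖toEuclideanLin A (w i) a‖ = ‖inner 𝕜 (w i) (toLp 2 (star (A a)))‖ := by
    rw [norm_inner_symm, EuclideanSpace.inner_eq_star_dotProduct, star_star, dotProduct_comm]
    rfl
  calc ∑ i ∈ s, ‖toEuclideanLin A (w i)‖ ^ 2
      = ∑ a, ∑ i ∈ s, ‖inner 𝕜 (w i) (toLp 2 (star (A a)))‖ ^ 2 := by
        simp only [EuclideanSpace.norm_sq_eq, h_row, sum_comm (s := s)]
    _ ≤ ∑ a, ‖toLp 2 (star (A a))‖ ^ 2 := sum_le_sum fun a _ ↦ hw.sum_inner_products_le _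
    _ = ‖A‖ ^ 2 := by simp [EuclideanSpace.norm_sq_eq, frobenius_norm_sq_eq_sum]

/-- The part `∑ i ∈ s, dᵢ uᵢ wᵢ*` of a singular value decomposition `∑ i, dᵢ uᵢ wᵢ*`. The full sum
is the case `s = univ`, and a truncation keeps the indices of the largest singular values. -/
def svdPartialSum (d : ι → 𝕜) (u : ι → EuclideanSpace 𝕜 m) (w : ι → EuclideanSpace 𝕜 n)
    (s : Finset ι) : Matrix m n 𝕜 :=
  ∑ i ∈ s, d i • vecMulVec (u i) (star (w i).ofLp)

variable {d : ι → 𝕜} {u : ι → EuclideanSpace 𝕜 m} {w : ι → EuclideanSpace 𝕜 n}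

lemma svdPartialSum_apply (s : Finset ι) (a : m) (b : n) :
    svdPartialSum d u w s a b = ∑ i ∈ s, d i * u i a * star (w i b) := by
  simp [svdPartialSum, Matrix.sum_apply, vecMulVec_apply, mul_assoc]

lemma svdPartialSum_univ_sub [Fintype ι] [DecidableEq ι] (s : Finset ι) :
    svdPartialSum d u w univ - svdPartialSum d u w s = svdPartialSum d u w sᶜ :=
  sub_eq_of_eq_add (sum_compl_add_sum s _).symm

lemma rank_svdPartialSum_le [Fintype n] (s : Finset ι) : (svdPartialSum d u w s).rank ≤ #s := by
  simpa only [svdPartialSum, smul_vecMulVec] using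
    rank_sum_vecMulVec_le (fun i ↦ d i • (u i).ofLp) (fun i ↦ star (w i).ofLp) s

lemma toEuclideanLin_svdPartialSum_apply [Fintype n] [DecidableEq n] (hw : Orthonormal 𝕜 w)
    {s : Finset ι} {i : ι} (hi : i ∈ s) :
    toEuclideanLin (svdPartialSum d u w s) (w i) = d i • u i := by
  classical
  have h_dot (j : ι) : star (w j).ofLp ⬝ᵥ (w i).ofLp = if j = i then 1 else 0 := by
    rw [dotProduct_comm, ← EuclideanSpace.inner_eq_star_dotProduct, orthonormal_iff_ite.1 hw]
  have h_term (j : ι) : toEuclideanLin (d j • vecMulVec (u j) (star (w j).ofLp)) (w i) =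
      if j = i then d j • u j else 0 := by
    rw [toLpLin_apply, smul_mulVec, vecMulVec_mulVec, h_dot]
    split_ifs <;> simp
  simp only [svdPartialSum, map_sum, LinearMap.sum_apply, h_term, sum_ite_eq', hi, if_true]

lemma frobenius_norm_sq_svdPartialSum [Fintype m] [Fintype n] (hu : Orthonormal 𝕜 u)
    (hw : Orthonormal 𝕜 w) (s : Finset ι) : ‖svdPartialSum d u w s‖ ^ 2 = ∑ i ∈ s, ‖d i‖ ^ 2 := by
  have h_col (b : n) :
      ∑ a, ‖svdPartialSum d u w s a b‖ ^ 2 = ∑ i ∈ s, ‖d i‖ ^ 2 * ‖w i b‖ ^ 2 := by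
    have h := norm_sq_sum_smul_of_orthonormal hu (fun i ↦ d i * star (w i b)) s
    simpa [EuclideanSpace.norm_sq_eq, svdPartialSum_apply, mul_pow, mul_right_comm] using h
  calc ‖svdPartialSum d u w s‖ ^ 2
      = ∑ i ∈ s, ‖d i‖ ^ 2 * ‖w i‖ ^ 2 := by
        rw [frobenius_norm_sq_eq_sum, sum_comm]
        simp only [h_col, sum_comm (t := s), ← mul_sum, EuclideanSpace.norm_sq_eq]
    _ = ∑ i ∈ s, ‖d i‖ ^ 2 := by simp [hw.1]

theorem svd_truncation_best_low_rank_approx_general [Fintype m] [Fintype n] [Fintype ι]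
    [DecidableEq ι] (hu : Orthonormal 𝕜 u) (hw : Orthonormal 𝕜 w) {s : Finset ι}
    (hd : ∀ i ∈ s, ∀ j ∉ s, ‖d j‖ ≤ ‖d i‖) :
    (svdPartialSum d u w s).rank ≤ #s ∧
      ‖svdPartialSum d u w univ - svdPartialSum d u w s‖ ^ 2 = ∑ i ∈ sᶜ, ‖d i‖ ^ 2 ∧
      ∀ B : Matrix m n 𝕜, B.rank ≤ #s →
        ∑ i ∈ sᶜ, ‖d i‖ ^ 2 ≤ ‖svdPartialSum d u w univ - B‖ ^ 2 := by
  classical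
  refine ⟨rank_svdPartialSum_le s, ?_, fun B hB ↦ ?_⟩
  · rw [svdPartialSum_univ_sub, frobenius_norm_sq_svdPartialSum hu hw]
  · rw [← finrank_range_toEuclideanLin] at hB
    calc ∑ i ∈ sᶜ, ‖d i‖ ^ 2
        ≤ ∑ i, ‖d i • u i - toEuclideanLin B (w i)‖ ^ 2 :=
          sum_compl_norm_sq_le_sum_norm_sq_smul_sub hu hd hB fun i ↦ LinearMap.mem_range_self _ _
      _ = ∑ i, ‖toEuclideanLin (svdPartialSum d u w univ - B) (w i)‖ ^ 2 := by
          simp only [map_sub, LinearMap.sub_apply,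
            toEuclideanLin_svdPartialSum_apply hw (mem_univ _)]
      _ ≤ ‖svdPartialSum d u w univ - B‖ ^ 2 :=
          sum_norm_sq_toEuclideanLin_le_frobenius_norm_sq hw _ univ

lemma orthonormal_toLp_iff_sum_mul_eq_ite [Fintype n] [DecidableEq ι] {v : ι → n → ℝ} :
    (Orthonormal ℝ fun i ↦ toLp 2 (v i)) ↔
      ∀ i j, ∑ a, v i a * v j a = if i = j then 1 else 0 := by
  simp [orthonormal_iff_ite, PiLp.inner_apply, mul_comm]

end Matrix

/-- Eckart–Young (best low-rank approximation in the Frobenius norm): if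
`U = ∑ i, d i • û i w̃ iᵀ` is a singular value decomposition (singular values
`d` nonincreasing and nonnegative, `û`, `w̃` orthonormal families), then for
every `r ≤ n` the truncation `U_r = ∑_{i<r} d i • û i w̃ iᵀ` has rank at most
`r`, satisfies `‖U − U_r‖_F² = ∑_{i≥r} d i²`, and every matrix `B` of rank at
most `r` satisfies `‖U − B‖_F² ≥ ∑_{i≥r} d i²`. -/
theorem svd_truncation_best_low_rank_approx (m n : ℕ)
    (d : Fin n → ℝ) (hd_nonneg : ∀ i, 0 ≤ d i)
    (hd_mono : ∀ i j : Fin n, i ≤ j → d j ≤ d i)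
    (u : Fin n → Fin m → ℝ) (w : Fin n → Fin n → ℝ)
    (hu : ∀ i j : Fin n, (∑ a : Fin m, u i a * u j a) = if i = j then 1 else 0)
    (hw : ∀ i j : Fin n, (∑ b : Fin n, w i b * w j b) = if i = j then 1 else 0)
    (U : Matrix (Fin m) (Fin n) ℝ)
    (hU : U = fun a b => ∑ i : Fin n, d i * u i a * w i b)
    (r : ℕ) (hr : r ≤ n)
    (Ur : Matrix (Fin m) (Fin n) ℝ)
    (hUr : Ur = fun a b =>
      ∑ i ∈ Finset.univ.filter (fun i : Fin n => (i : ℕ) < r), d i * u i a * w i b) :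
    Ur.rank ≤ r ∧
      (∑ a : Fin m, ∑ b : Fin n, (U a b - Ur a b) ^ 2) =
        (∑ i ∈ Finset.univ.filter (fun i : Fin n => r ≤ (i : ℕ)), d i ^ 2) ∧
      ∀ B : Matrix (Fin m) (Fin n) ℝ, B.rank ≤ r →
        (∑ i ∈ Finset.univ.filter (fun i : Fin n => r ≤ (i : ℕ)), d i ^ 2) ≤
          ∑ a : Fin m, ∑ b : Fin n, (U a b - B a b) ^ 2 := by
  have h_svd (s : Finset (Fin n)) : (fun a b ↦ ∑ i ∈ s, d i * u i a * w i b) =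
      svdPartialSum d (fun i ↦ WithLp.toLp 2 (u i)) (fun i ↦ WithLp.toLp 2 (w i)) s := by
    ext a b
    simp [svdPartialSum_apply]
  have h_card : #{i : Fin n | (i : ℕ) < r} = r := by rw [Fin.card_filter_val_lt, min_eq_right hr]
  have h_largest (i : Fin n) (hi : i ∈ univ.filter fun i : Fin n ↦ (i : ℕ) < r) (j : Fin n)
      (hj : j ∉ univ.filter fun i : Fin n ↦ (i : ℕ) < r) : ‖d j‖ ≤ ‖d i‖ := by
    simp only [mem_filter_univ, not_lt, Real.norm_of_nonneg (hd_nonneg _)] at hi hj ⊢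
    exact hd_mono i j (hi.le.trans hj)
  have h_general := svd_truncation_best_low_rank_approx_general
    (orthonormal_toLp_iff_sum_mul_eq_ite.2 hu) (orthonormal_toLp_iff_sum_mul_eq_ite.2 hw) h_largest
  simpa only [h_card, compl_filter, not_lt, ← h_svd, ← hU, ← hUr, frobenius_norm_sq_eq_sum,
    Matrix.sub_apply, Real.norm_eq_abs, sq_abs] using h_general
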